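/- arXiv:1702.01218 — 4 statements merged into one kernel-verified Lean document; each statement's English description precedes it below -/
import Mathlib

section
/- (Proposition 1, second part, rigorous form.) Fix q_1,…,q_4 ≥ 0 with Σ_i q_i = 1, ζ_1,…,ζ_4 > 0, σ_h² > 0 and κ > 0. Let (S_l)_{l≥1} be i.i.d. with P(S_l = i) = q_i, and let (Z_l)_{l≥1} be i.i.d. exponential with mean σ_h², with the two sequences independent. Define the accumulated SNR Γ_m = Σ_{l=1}^m ζ_{S_l} Z_l, and for nonnegative integers m_1, m_2, m_3, m_4 define F(κ; m_1,m_2,m_3,m_4) = P(Σ_{i=1}^4 ζ_i (X_{i,1} + ⋯ + X_{i,m_i}) ≤ κ), where all X_{i,j} are independent exponential random variables with mean σ_h². Then for every m ≥ 1 with P(Γ_m < κ) > 0, the conditional decoding-failure probability under HARQ chase combining satisfies p_m = P(Γ_{m+1} < κ | Γ_m < κ) = [ Σ_{m_1+m_2+m_3+m_4=m} (m!/(m_1! m_2! m_3! m_4!)) (∏_i q_i^{m_i}) Σ_{i=1}^4 q_i F(κ; m_1,…,m_i+1,…,m_4) ] / [ Σ_{m_1+m_2+m_3+m_4=m} (m!/(m_1!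 m_2! m_3! m_4!)) (∏_i q_i^{m_i}) F(κ; m_1,m_2,m_3,m_4) ]. -/
open MeasureTheory ProbabilityTheory Real Finset

/-- `F(κ; m₁,m₂,m₃,m₄)`: the probability that `∑ᵢ ζᵢ (Xᵢ,₁ + ⋯ + Xᵢ,ₘᵢ) ≤ κ`, where all
`Xᵢ,ⱼ` are independent exponential random variables with mean `σ_h²`. -/
noncomputable def Fcc (σh2 κ : ℝ) (ζ : Fin 4 → ℝ) (v : Fin 4 → ℕ) : ℝ :=
  ((Measure.pi fun i : Fin 4 => Measure.pi fun _ : Fin (v i) => expMeasure (1 / σh2))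
    {x | ∑ i, ζ i * ∑ j, x i j ≤ κ}).toReal

/-!
Let `φ` be the characteristic function of the fading law. A single frame contributes the mixture
`∑ i, q i * φ (ζ i * t)`, so by independence `Γ_m` has characteristic function
`(∑ i, q i * φ (ζ i * t)) ^ m`. Its multinomial expansion is the characteristic function of a
mixture of the laws of `∑ i, ζ i * (X i 1 + ⋯ + X i (v i))`, and characteristic functions determine
finite measures; leaving one factor unexpanded at time `m + 1` gives the numerator. Fading is
nonnegative, so failure at `m + 1` implies failure at `m` and the conditional probability is a
quotient; it has no atoms, so `< κ` and `≤ κ` have the same probability.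
-/

section Independence

variable {Ω ι : Type*} {mΩ : MeasurableSpace Ω} {μ : Measure Ω}

theorem iIndepFun_prodMk_of_indepFun {α β : ι → Type*}
    [∀ i, MeasurableSpace (α i)] [∀ i, MeasurableSpace (β i)]
    {X : ∀ i, Ω → α i} {Y : ∀ i, Ω → β i} (hXm : ∀ i, Measurable (X i))
    (hYm : ∀ i, Measurable (Y i)) (hX : iIndepFun X μ) (hY : iIndepFun Y μ)
    (hXY : IndepFun (fun ω i => X i ω) (fun ω i => Y i ω) μ) :
    iIndepFun (fun i ω => (X i ω, Y i ω)) μ := by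
  let rectangles (i : ι) : Set (Set (α i × β i)) :=
    Set.image2 (· ×ˢ ·) {s | MeasurableSet s} {t | MeasurableSet t}
  rw [iIndepFun_iff_iIndep]
  refine iIndepSets.iIndep (fun i => ((hXm i).prodMk (hYm i)).comap_le)
    (fun i => Set.preimage (fun ω => (X i ω, Y i ω)) '' rectangles i)
    (fun i => isPiSystem_prod.comap _)
    (fun i => by rw [← generateFrom_prod, MeasurableSpace.comap_generateFrom]) ?_
  rw [iIndepSets_iff]
  intro T f hf
  choose! r hr hrf using hf
  choose! s hs t ht hst using hr
  have hf_inter : ∀ i ∈ T, f i = X i ⁻¹' s i ∩ Y i ⁻¹' t i := fun i hi => by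
    rw [← hrf i hi, ← hst i hi, Set.mk_preimage_prod]
  have hXY_cylinder := hXY.measure_inter_preimage_eq_mul
    {x | ∀ i ∈ T, x i ∈ s i} {y | ∀ i ∈ T, y i ∈ t i}
    (.pi T.countable_toSet hs) (.pi T.countable_toSet ht)
  calc μ (⋂ i ∈ T, f i)
      = μ ((⋂ i ∈ T, X i ⁻¹' s i) ∩ ⋂ i ∈ T, Y i ⁻¹' t i) := by
        rw [Set.iInter₂_congr hf_inter]; simp only [Set.iInter_inter_distrib]
    _ = μ (⋂ i ∈ T, X i ⁻¹' s i) * μ (⋂ i ∈ T, Y i ⁻¹' t i) := by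
        convert hXY_cylinder using 3 <;> ext ω <;> simp
    _ = (∏ i ∈ T, μ (X i ⁻¹' s i)) * ∏ i ∈ T, μ (Y i ⁻¹' t i) := by
        rw [hX.measure_inter_preimage_eq_mul _ hs, hY.measure_inter_preimage_eq_mul _ ht]
    _ = ∏ i ∈ T, μ (f i) := by
        rw [← prod_mul_distrib]
        refine prod_congr rfl fun i hi => ?_
        rw [hf_inter i hi]
        exact ((hXY.comp (measurable_pi_apply i) (measurable_pi_apply i)
          ).measure_inter_preimage_eq_mul _ _ (hs i hi) (ht i hi)).symm

theorem charFun_map_comp_mul_of_indepFun [IsFiniteMeasure μ] [Fintype ι] [MeasurableSpace ι]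
    [MeasurableSingletonClass ι] {X : Ω → ι} {Z : Ω → ℝ} (hX : Measurable X) (hZ : Measurable Z)
    (hXZ : IndepFun X Z μ) (ζ : ι → ℝ) (t : ℝ) :
    charFun (μ.map fun ω => ζ (X ω) * Z ω) t =
      ∑ i, μ.real (X ⁻¹' {i}) * charFun (μ.map Z) (ζ i * t) := by
  have hζ : Measurable ζ := measurable_of_finite ζ
  have hlaw : μ.map (fun ω => ζ (X ω) * Z ω) =
      ((μ.map X).prod (μ.map Z)).map fun p => ζ p.1 * p.2 := by
    rw [← hXZ.map_prod_eq_prod_map_map hX.aemeasurable hZ.aemeasurable,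
      Measure.map_map (by fun_prop) (by fun_prop)]
    rfl
  have hint : Integrable (fun p : ι × ℝ => Complex.exp (t * (ζ p.1 * p.2 : ℝ) * Complex.I))
      ((μ.map X).prod (μ.map Z)) :=
    .of_bound (by fun_prop) 1 (ae_of_all _ fun p => by
      rw [← Complex.ofReal_mul, Complex.norm_exp_ofReal_mul_I])
  rw [hlaw, charFun_apply_real, integral_map (by fun_prop) (by fun_prop), integral_prod _ hint,
    integral_fintype hint.integral_prod_left]
  refine sum_congr rfl fun i _ => ?_
  rw [map_measureReal_apply hX (measurableSet_singleton i), Complex.real_smul, charFun_apply_real]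
  congr! 5
  push_cast
  ring

end Independence

section Measure

theorem nullSingletonClass_conv {G : Type*} [AddGroup G] [MeasurableSpace G] [MeasurableAdd₂ G]
    [MeasurableSingletonClass G] {μ ν : Measure G} [SFinite ν] [NullSingletonClass ν] :
    NullSingletonClass (μ ∗ ν) where
  measure_singleton x := by
    have hfiber (y : G) : (fun z => y + z) ⁻¹' {x} = {-y + x} := by
      ext z; simp [eq_neg_add_iff_add_eq]
    rw [Measure.conv, Measure.map_apply measurable_add (measurableSet_singleton x),
      Measure.prod_apply (measurable_add (measurableSet_singleton x))]
    simp only [← Set.preimage_comp, Function.comp_def, hfiber, measure_singleton, lintegral_zero]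

theorem nullSingletonClass_map_of_injective {α β : Type*} [MeasurableSpace α] [MeasurableSpace β]
    [MeasurableSingletonClass β] {μ : Measure α} [NullSingletonClass μ] {f : α → β}
    (hf : Measurable f) (hinj : f.Injective) : NullSingletonClass (μ.map f) where
  measure_singleton y := by
    rw [Measure.map_apply hf (measurableSet_singleton y)]
    exact (Set.subsingleton_singleton.preimage hinj).measure_zero μ

theorem measureReal_eq_sum_of_charFun_eq_sum {α E : Type*} [NormedAddCommGroup E]
    [InnerProductSpace ℝ E] [CompleteSpace E] [SecondCountableTopology E] [MeasurableSpace E]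
    [BorelSpace E] {s : Finset α} {c : α → ℝ} (hc : ∀ a ∈ s, 0 ≤ c a) {M : α → Measure E}
    [∀ a, IsFiniteMeasure (M a)] {ρ : Measure E} [IsFiniteMeasure ρ]
    (hρ : ∀ t, charFun ρ t = ∑ a ∈ s, c a * charFun (M a) t) (A : Set E) :
    ρ.real A = ∑ a ∈ s, c a * (M a).real A := by
  have hmixture : ρ = ∑ a ∈ s, (c a).toNNReal • M a := by
    refine Measure.ext_of_charFun (funext fun t => ?_)
    rw [hρ, charFun_apply, integral_finsetSum_measure fun a _ => ?_]
    · refine sum_congr rfl fun a ha => ?_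
      rw [integral_smul_nnreal_measure, NNReal.smul_def, Real.coe_toNNReal _ (hc a ha),
        Complex.real_smul, charFun_apply]
    · exact .of_bound (by fun_prop) 1 (ae_of_all _ fun x => by rw [Complex.norm_exp_ofReal_mul_I])
  rw [hmixture, measureReal_def, Measure.finsetSum_apply,
    ENNReal.toReal_sum fun a _ => measure_ne_top _ A]
  refine sum_congr rfl fun a ha => ?_
  rw [← measureReal_def, measureReal_nnreal_smul_apply, Real.coe_toNNReal _ (hc a ha)]

end Measure

section WeightedSumLaw

variable {ι : Type*} [Fintype ι]

/-- The law of `∑ i, ζ i * (X i 1 + ⋯ + X i (v i))` for independent `X i j`, all with law `ν`;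
its distribution function is the `F(·; v)` of the paper. -/
noncomputable def weightedSumLaw (ν : Measure ℝ) (ζ : ι → ℝ) (v : ι → ℕ) : Measure ℝ :=
  (Measure.pi fun i => Measure.pi fun _ : Fin (v i) => ν).map fun x => ∑ i, ζ i * ∑ j, x i j

theorem measurable_weightedSum (ζ : ι → ℝ) (v : ι → ℕ) :
    Measurable fun x : ∀ i, Fin (v i) → ℝ => ∑ i, ζ i * ∑ j, x i j := by
  fun_prop

theorem Fcc_eq_weightedSumLaw_Iic (σh2 κ : ℝ) (ζ : Fin 4 → ℝ) (v : Fin 4 → ℕ) :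
    Fcc σh2 κ ζ v = (weightedSumLaw (expMeasure (1 / σh2)) ζ v).real (Set.Iic κ) :=
  (map_measureReal_apply (measurable_weightedSum ζ v) measurableSet_Iic).symm

variable {ν : Measure ℝ} [IsProbabilityMeasure ν] {ζ : ι → ℝ}

instance isProbabilityMeasure_weightedSumLaw (v : ι → ℕ) :
    IsProbabilityMeasure (weightedSumLaw ν ζ v) :=
  Measure.isProbabilityMeasure_map (measurable_weightedSum ζ v).aemeasurable

theorem charFun_weightedSumLaw (v : ι → ℕ) (t : ℝ) :
    charFun (weightedSumLaw ν ζ v) t = ∏ i, charFun ν (ζ i * t) ^ v i := by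
  have hexp (x : ∀ i, Fin (v i) → ℝ) :
      Complex.exp (t * (∑ i, ζ i * ∑ j, x i j : ℝ) * Complex.I) =
        ∏ i, ∏ j, Complex.exp ((ζ i * t : ℝ) * x i j * Complex.I) := by
    simp only [← Complex.exp_sum]
    push_cast
    simp only [mul_sum, sum_mul]
    exact congrArg _ (sum_congr rfl fun i _ => sum_congr rfl fun j _ => by ring)
  rw [weightedSumLaw, charFun_apply_real,
    integral_map (measurable_weightedSum ζ v).aemeasurable (by fun_prop)]
  simp only [hexp]
  rw [integral_fintype_prod_eq_prod fun i (y : Fin (v i) → ℝ) =>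
    ∏ j, Complex.exp ((ζ i * t : ℝ) * y j * Complex.I)]
  refine prod_congr rfl fun i _ => ?_
  rw [integral_fintype_prod_eq_pow fun y : ℝ => Complex.exp ((ζ i * t : ℝ) * y * Complex.I),
    Fintype.card_fin, charFun_apply_real]

theorem charFun_weightedSumLaw_add_single [DecidableEq ι] (v : ι → ℕ) (i : ι) (t : ℝ) :
    charFun (weightedSumLaw ν ζ (v + Pi.single i 1)) t =
      charFun (weightedSumLaw ν ζ v) t * charFun ν (ζ i * t) := by
  have hsingle : ∏ j, charFun ν (ζ j * t) ^ (Pi.single i 1 : ι → ℕ) j = charFun ν (ζ i * t) := by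
    rw [Fintype.prod_eq_single i fun j hj => by rw [Pi.single_eq_of_ne hj, pow_zero],
      Pi.single_eq_same, pow_one]
  simp only [charFun_weightedSumLaw, Pi.add_apply, pow_add, prod_mul_distrib, hsingle]

theorem weightedSumLaw_add_single [DecidableEq ι] (v : ι → ℕ) (i : ι) :
    weightedSumLaw ν ζ (v + Pi.single i 1) = weightedSumLaw ν ζ v ∗ ν.map (ζ i * ·) := by
  have := Measure.isProbabilityMeasure_map (μ := ν) (f := (ζ i * ·)) (by fun_prop)
  refine Measure.ext_of_charFun (funext fun t => ?_)
  rw [charFun_conv, charFun_map_mul, charFun_weightedSumLaw_add_single]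

theorem weightedSumLaw_singleton [NullSingletonClass ν] (v : ι → ℕ) {κ : ℝ} (hκ : κ ≠ 0) :
    weightedSumLaw ν ζ v {κ} = 0 := by
  classical
  by_cases hv : ∃ i, v i ≠ 0 ∧ ζ i ≠ 0
  · obtain ⟨i, hvi, hζi⟩ := hv
    have := nullSingletonClass_map_of_injective (μ := ν) (measurable_const_mul (ζ i))
      (mul_right_injective₀ hζi)
    have hle : Pi.single i 1 ≤ v := update_le_iff.2
      ⟨Nat.one_le_iff_ne_zero.2 hvi, fun j _ => Nat.zero_le (v j)⟩
    obtain ⟨w, rfl⟩ := le_iff_exists_add'.1 hle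
    rw [weightedSumLaw_add_single]
    exact nullSingletonClass_conv.measure_singleton κ
  · have hzero (i : ι) (x : Fin (v i) → ℝ) : ζ i * ∑ j, x j = 0 := by
      by_cases hvi : v i = 0
      · have : IsEmpty (Fin (v i)) := by rw [hvi]; infer_instance
        simp
      · simp [not_not.1 fun hζi => hv ⟨i, hvi, hζi⟩]
    simp [weightedSumLaw, hzero, hκ.symm]

variable [DecidableEq ι] {q : ι → ℝ} {ρ : Measure ℝ} [IsFiniteMeasure ρ] {m : ℕ}

theorem measureReal_eq_sum_weightedSumLaw (hq : ∀ i, 0 ≤ q i)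
    (hρ : ∀ t, charFun ρ t = (∑ i, q i * charFun ν (ζ i * t)) ^ m) (A : Set ℝ) :
    ρ.real A = ∑ v ∈ piAntidiag univ m,
      Nat.multinomial univ v * (∏ i, q i ^ v i) * (weightedSumLaw ν ζ v).real A := by
  refine measureReal_eq_sum_of_charFun_eq_sum (fun v _ =>
    mul_nonneg (Nat.cast_nonneg _) (prod_nonneg fun i _ => pow_nonneg (hq i) _)) (fun t => ?_) A
  rw [hρ, sum_pow_eq_sum_piAntidiag]
  refine sum_congr rfl fun v _ => ?_
  simp only [charFun_weightedSumLaw, mul_pow, prod_mul_distrib]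
  push_cast
  ring

theorem measureReal_eq_sum_weightedSumLaw_succ (hq : ∀ i, 0 ≤ q i)
    (hρ : ∀ t, charFun ρ t = (∑ i, q i * charFun ν (ζ i * t)) ^ (m + 1)) (A : Set ℝ) :
    ρ.real A = ∑ v ∈ piAntidiag univ m, Nat.multinomial univ v * (∏ i, q i ^ v i) *
      ∑ i, q i * (weightedSumLaw ν ζ (v + Pi.single i 1)).real A := by
  have hexpand := measureReal_eq_sum_of_charFun_eq_sum (s := piAntidiag univ m ×ˢ univ)
    (c := fun p : (ι → ℕ) × ι => Nat.multinomial univ p.1 * (∏ i, q i ^ p.1 i) * q p.2)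
    (M := fun p => weightedSumLaw ν ζ (p.1 + Pi.single p.2 1)) (ρ := ρ)
    (fun p _ => mul_nonneg (mul_nonneg (Nat.cast_nonneg _)
      (prod_nonneg fun i _ => pow_nonneg (hq i) _)) (hq p.2)) (fun t => ?_) A
  · simp only [hexpand, sum_product, mul_sum, mul_assoc]
  · rw [hρ, pow_succ, sum_pow_eq_sum_piAntidiag, sum_mul_sum, sum_product]
    refine sum_congr rfl fun v _ => sum_congr rfl fun i _ => ?_
    rw [charFun_weightedSumLaw_add_single, charFun_weightedSumLaw]
    simp only [mul_pow, prod_mul_distrib]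
    push_cast
    ring

end WeightedSumLaw

section AccumulatedSNR

variable {Ω ι : Type*}

/-- The accumulated SNR `Γ_m = ζ_{S_1} Z_1 + ⋯ + ζ_{S_m} Z_m`, with frames indexed from `0`. -/
def accumulatedSNR (ζ : ι → ℝ) (S : ℕ → Ω → ι) (Z : ℕ → Ω → ℝ) (m : ℕ) (ω : Ω) : ℝ :=
  ∑ l ∈ range m, ζ (S l ω) * Z l ω

variable {ζ : ι → ℝ} {S : ℕ → Ω → ι} {Z : ℕ → Ω → ℝ}

variable [MeasurableSpace Ω] {μ : Measure Ω}

theorem ae_accumulatedSNR_le_succ (hζ : ∀ i, 0 ≤ ζ i) {m : ℕ} (hZ : ∀ᵐ ω ∂μ, 0 ≤ Z m ω) :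
    ∀ᵐ ω ∂μ, accumulatedSNR ζ S Z m ω ≤ accumulatedSNR ζ S Z (m + 1) ω := by
  filter_upwards [hZ] with ω hω
  rw [accumulatedSNR, accumulatedSNR, sum_range_succ]
  exact le_add_of_nonneg_right (mul_nonneg (hζ _) hω)

variable [MeasurableSpace ι]

theorem measurable_accumulatedSNR (hζ : Measurable ζ) (hS : ∀ l, Measurable (S l))
    (hZ : ∀ l, Measurable (Z l)) (m : ℕ) : Measurable (accumulatedSNR ζ S Z m) := by
  unfold accumulatedSNR
  fun_prop

theorem charFun_map_accumulatedSNR [Fintype ι] [MeasurableSingletonClass ι]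
    (hSmeas : ∀ l, Measurable (S l)) (hSindep : iIndepFun S μ) {q : ι → ℝ}
    (hSlaw : ∀ l i, μ.real (S l ⁻¹' {i}) = q i)
    (hZmeas : ∀ l, Measurable (Z l)) (hZindep : iIndepFun Z μ) {ν : Measure ℝ}
    (hZlaw : ∀ l, μ.map (Z l) = ν)
    (hSZindep : IndepFun (fun ω l => S l ω) (fun ω l => Z l ω) μ) (m : ℕ) (t : ℝ) :
    charFun (μ.map (accumulatedSNR ζ S Z m)) t = (∑ i, q i * charFun ν (ζ i * t)) ^ m := by
  have := hSindep.isProbabilityMeasure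
  have hζ : Measurable ζ := measurable_of_finite ζ
  have hindep : iIndepFun (fun l ω => ζ (S l ω) * Z l ω) μ :=
    (iIndepFun_prodMk_of_indepFun hSmeas hZmeas hSindep hZindep hSZindep).comp
      (fun _ p => ζ p.1 * p.2) fun _ => by fun_prop
  have hframe (l : ℕ) : charFun (μ.map fun ω => ζ (S l ω) * Z l ω) t =
      ∑ i, q i * charFun ν (ζ i * t) := by
    rw [charFun_map_comp_mul_of_indepFun (hSmeas l) (hZmeas l)
      (hSZindep.comp (measurable_pi_apply l) (measurable_pi_apply l))]
    simp only [hSlaw, hZlaw]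
  unfold accumulatedSNR
  rw [iIndepFun.charFun_map_fun_finsetSum_eq_prod (fun l _ => by fun_prop) (hindep.restrict _),
    Finset.prod_apply]
  simp only [hframe, prod_const, card_range]

theorem stmt5_general [Fintype ι] [DecidableEq ι] [MeasurableSingletonClass ι] {q : ι → ℝ}
    (hζ : ∀ i, 0 ≤ ζ i) {ν : Measure ℝ} [IsProbabilityMeasure ν] [NullSingletonClass ν]
    (hν : ∀ᵐ x ∂ν, 0 ≤ x) {κ : ℝ} (hκ : κ ≠ 0) (hSmeas : ∀ l, Measurable (S l))
    (hSindep : iIndepFun S μ) (hSlaw : ∀ l i, μ.real (S l ⁻¹' {i}) = q i)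
    (hZmeas : ∀ l, Measurable (Z l)) (hZindep : iIndepFun Z μ) (hZlaw : ∀ l, μ.map (Z l) = ν)
    (hSZindep : IndepFun (fun ω l => S l ω) (fun ω l => Z l ω) μ) {m : ℕ}
    (hpos : 0 < μ {ω | accumulatedSNR ζ S Z m ω < κ}) :
    μ[{ω | accumulatedSNR ζ S Z (m + 1) ω < κ} | {ω | accumulatedSNR ζ S Z m ω < κ}] =
      ENNReal.ofReal
        ((∑ v ∈ piAntidiag univ m, Nat.multinomial univ v * (∏ i, q i ^ v i) *
            ∑ i, q i * (weightedSumLaw ν ζ (v + Pi.single i 1)).real (Set.Iic κ)) /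
          ∑ v ∈ piAntidiag univ m, Nat.multinomial univ v * (∏ i, q i ^ v i) *
            (weightedSumLaw ν ζ v).real (Set.Iic κ)) := by
  have := hSindep.isProbabilityMeasure
  have hΓ := measurable_accumulatedSNR (measurable_of_finite ζ) hSmeas hZmeas
  have hq (i : ι) : 0 ≤ q i := hSlaw 0 i ▸ measureReal_nonneg
  have hchar := charFun_map_accumulatedSNR (ζ := ζ) hSmeas hSindep hSlaw hZmeas hZindep hZlaw
    hSZindep
  have hF (v : ι → ℕ) :
      (weightedSumLaw ν ζ v).real (Set.Iio κ) = (weightedSumLaw ν ζ v).real (Set.Iic κ) :=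
    measureReal_congr (Iio_ae_eq_Iic' (weightedSumLaw_singleton v hκ))
  have hfail (n : ℕ) : (μ.map (accumulatedSNR ζ S Z n)).real (Set.Iio κ) =
      μ.real {ω | accumulatedSNR ζ S Z n ω < κ} :=
    map_measureReal_apply (hΓ n) measurableSet_Iio
  have hnested : μ ({ω | accumulatedSNR ζ S Z m ω < κ} ∩
      {ω | accumulatedSNR ζ S Z (m + 1) ω < κ}) =
      μ {ω | accumulatedSNR ζ S Z (m + 1) ω < κ} := by
    refine measure_congr ?_
    filter_upwards [ae_accumulatedSNR_le_succ (S := S) hζ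
      (ae_of_ae_map (hZmeas m).aemeasurable (hZlaw m ▸ hν))] with ω hω
    exact propext (and_iff_right_of_imp hω.trans_lt)
  have hnum := measureReal_eq_sum_weightedSumLaw_succ hq (hchar (m + 1)) (Set.Iio κ)
  have hden := measureReal_eq_sum_weightedSumLaw hq (hchar m) (Set.Iio κ)
  simp only [hfail, hF] at hnum hden
  have hpos_real : 0 < μ.real {ω | accumulatedSNR ζ S Z m ω < κ} :=
    ENNReal.toReal_pos hpos.ne' (measure_ne_top _ _)
  rw [cond_apply (measurableSet_lt (hΓ m) measurable_const), hnested, ← hnum, ← hden,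
    ENNReal.ofReal_div_of_pos hpos_real, ofReal_measureReal, ofReal_measureReal, mul_comm,
    div_eq_mul_inv]

end AccumulatedSNR

instance nullSingletonClass_expMeasure (r : ℝ) : NullSingletonClass (expMeasure r) :=
  inferInstanceAs (NullSingletonClass (volume.withDensity (gammaPDF 1 r)))

theorem ae_nonneg_expMeasure (r : ℝ) : ∀ᵐ x ∂expMeasure r, 0 ≤ x := by
  simp only [ae_iff, not_le]
  exact (withDensity_apply _ measurableSet_Iio).trans (lintegral_exponentialPDF_of_nonpos le_rfl)

/-- Proposition 1, second part (rigorous form): under HARQ chase combining, with i.i.d.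
scenarios `S_l` (values in `{1,2,3,4}` with probabilities `qᵢ`), i.i.d. exponential fading
powers `Z_l` of mean `σ_h²` independent of the scenarios, and accumulated SNR
`Γ_m = ∑_{l<m} ζ_{S_l} Z_l`, the conditional decoding-failure probability
`p_m = P(Γ_{m+1} < κ | Γ_m < κ)` is the stated ratio of multinomial sums of `F`. -/
theorem stmt5
    {Ω : Type*} [MeasureSpace Ω] [IsProbabilityMeasure (ℙ : Measure Ω)]
    (q : Fin 4 → ℝ) (hq : ∀ i, 0 ≤ q i) (hqsum : ∑ i, q i = 1)
    (ζ : Fin 4 → ℝ) (hζ : ∀ i, 0 < ζ i)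
    (σh2 κ : ℝ) (hσ : 0 < σh2) (hκ : 0 < κ)
    (S : ℕ → Ω → Fin 4) (hSmeas : ∀ l, Measurable (S l))
    (hSindep : iIndepFun S ℙ)
    (hSlaw : ∀ l i, ℙ {ω | S l ω = i} = ENNReal.ofReal (q i))
    (Z : ℕ → Ω → ℝ) (hZmeas : ∀ l, Measurable (Z l))
    (hZindep : iIndepFun Z ℙ)
    (hZlaw : ∀ l, Measure.map (Z l) ℙ = expMeasure (1 / σh2))
    (hSZindep : IndepFun (fun ω l => S l ω) (fun ω l => Z l ω) ℙ)
    (Γ : ℕ → Ω → ℝ) (hΓ : ∀ m ω, Γ m ω = ∑ l ∈ Finset.range m, ζ (S l ω) * Z l ω)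
    (m : ℕ) (hm : 1 ≤ m)
    (hpos : 0 < ℙ {ω | Γ m ω < κ}) :
    ℙ[{ω | Γ (m + 1) ω < κ} | {ω | Γ m ω < κ}] =
      ENNReal.ofReal
        ((∑ v ∈ Finset.Nat.antidiagonalTuple 4 m,
            (Nat.multinomial Finset.univ v : ℝ) * (∏ i, q i ^ v i) *
              ∑ i, q i * Fcc σh2 κ ζ (v + Pi.single i 1)) /
          (∑ v ∈ Finset.Nat.antidiagonalTuple 4 m,
            (Nat.multinomial Finset.univ v : ℝ) * (∏ i, q i ^ v i) * Fcc σh2 κ ζ v)) := by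
  obtain rfl : Γ = accumulatedSNR ζ S Z := funext₂ hΓ
  have := isProbabilityMeasure_expMeasure (one_div_pos.2 hσ)
  simp only [Fcc_eq_weightedSumLaw_Iic, ← piAntidiag_univ_fin_eq_antidiagonalTuple]
  have hSlaw_real (l : ℕ) (i : Fin 4) : (ℙ : Measure Ω).real (S l ⁻¹' {i}) = q i :=
    (congrArg ENNReal.toReal (hSlaw l i)).trans (ENNReal.toReal_ofReal (hq i))
  exact stmt5_general (fun i => (hζ i).le) (ae_nonneg_expMeasure _) hκ.ne' hSmeas hSindep
    hSlaw_real hZmeas hZindep hZlaw hSZindep hpos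
end

section
/- (Series expansion for the CDF of a weighted sum of exponentials.) Let n ≥ 1, let β_1, …, β_n > 0, set β_min = min_i β_i, and let z_1, …, z_n be i.i.d. exponential random variables with mean 1. Define γ_k = Σ_{i=1}^n (1/k)(1 − β_min/β_i)^k for k ≥ 1, and δ_0 = 1, δ_{k+1} = (1/(k+1)) Σ_{l=1}^{k+1} l γ_l δ_{k+1−l} for k ≥ 0. Then for every x ≥ 0, P(Σ_{i=1}^n β_i z_i ≤ x) = (∏_{i=1}^n β_min/β_i) · Σ_{k=0}^∞ δ_k · p(x/β_min, n + k), where p(x,a) denotes the regularized lower incomplete Gamma function p(x,a) = (1/Γ(a)) ∫₀ˣ τ^{a−1} e^{−τ} dτ, and the series converges. -/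
open MeasureTheory ProbabilityTheory Real Finset

/-- The regularized lower incomplete Gamma function
`p(x,a) = (1/Γ(a)) ∫₀ˣ τ^{a-1} e^{-τ} dτ`. -/
noncomputable def regIncGamma (x a : ℝ) : ℝ :=
  (1 / Real.Gamma a) * ∫ τ in (0:ℝ)..x, τ ^ (a - 1) * Real.exp (-τ)

/-- The coefficients `δ₀ = 1`, `δ_{k+1} = (1/(k+1)) ∑_{l=1}^{k+1} l γ_l δ_{k+1-l}`. -/
noncomputable def deltaSeq (γ : ℕ → ℝ) : ℕ → ℝ
  | 0 => 1
  | k + 1 =>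
      (1 / ((k : ℝ) + 1)) *
        ∑ l ∈ Finset.range (k + 1), ((l : ℝ) + 1) * γ (l + 1) * deltaSeq γ (k - l)
  decreasing_by omega

/-!
The generating function of `deltaSeq γ` is `exp (∑_{k ≥ 1} γ_k X^k)`. Hence adding two sequences `γ`
convolves the coefficients `δ`, and `γ_k = a q^k / k` gives `(1 - q X)^(-a)`, whose coefficients are
the unnormalized negative binomial weights.

With `q = 1 - r / s` these are the weights of the law `Gamma(a, r)` as a mixture of the laws
`Gamma(a + k, s)`: expand `exp ((s - r) x)` in the quotient of the densities. Since gamma laws of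
equal rate form a convolution semigroup, convolving such mixtures convolves their weights. Applied
to `β_i z_i ∼ Gamma(a_i, 1 / β_i)`, all expanded at the common rate `1 / b` with `b ≤ β_i`, this
gives Moschopoulos' expansion of the law of `∑ β_i z_i`, of which the case `a_i = 1` is wanted.
-/

section GeneratingFunction

open PowerSeries

lemma eq_mk_deltaSeq_iff {γ : ℕ → ℝ} {φ : ℝ⟦X⟧} :
    φ = PowerSeries.mk (deltaSeq γ) ↔
      constantCoeff φ = 1 ∧ d⁄dX ℝ φ = d⁄dX ℝ (PowerSeries.mk γ) * φ := by
  have coeff_derivative_iff (k : ℕ) : coeff k (d⁄dX ℝ φ) = coeff k (d⁄dX ℝ (PowerSeries.mk γ) * φ) ↔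
      coeff (k + 1) φ = 1 / ((k : ℝ) + 1) *
        ∑ l ∈ range (k + 1), ((l : ℝ) + 1) * γ (l + 1) * coeff (k - l) φ := by
    rw [one_div, eq_inv_mul_iff_mul_eq₀ (by positivity), coeff_mul,
      Nat.sum_antidiagonal_eq_sum_range_succ_mk]
    simp only [coeff_derivative, coeff_mk, mul_comm]
  constructor
  · rintro rfl
    refine ⟨by simp [deltaSeq], ?_⟩
    ext k
    rw [coeff_derivative_iff]
    simp only [coeff_mk, deltaSeq]
  · rintro ⟨h0, h⟩
    ext k
    rw [coeff_mk]
    induction k using Nat.strong_induction_on with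
    | _ k ih =>
      cases k with
      | zero => simpa [deltaSeq] using h0
      | succ k =>
        rw [(coeff_derivative_iff k).1 (by rw [h]), deltaSeq]
        congr! 3 with l
        exact ih _ (by omega)

lemma deltaSeq_congr {γ γ' : ℕ → ℝ} (h : ∀ k, γ (k + 1) = γ' (k + 1)) :
    deltaSeq γ = deltaSeq γ' := by
  funext k
  induction k using Nat.strong_induction_on with
  | _ k ih =>
    cases k with
    | zero => simp only [deltaSeq]
    | succ k =>
      simp only [deltaSeq, h]
      congr! 3 with l
      exact ih _ (by omega)

lemma deltaSeq_nonneg {γ : ℕ → ℝ} (hγ : ∀ k, 0 ≤ γ (k + 1)) (k : ℕ) : 0 ≤ deltaSeq γ k := by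
  induction k using Nat.strong_induction_on with
  | _ k ih =>
    cases k with
    | zero => simp only [deltaSeq, zero_le_one]
    | succ k =>
      rw [deltaSeq]
      have summand_nonneg (l : ℕ) : 0 ≤ ((l : ℝ) + 1) * γ (l + 1) * deltaSeq γ (k - l) :=
        mul_nonneg (mul_nonneg (by positivity) (hγ l)) (ih _ (by omega))
      exact mul_nonneg (by positivity) (sum_nonneg fun l _ ↦ summand_nonneg l)

lemma deltaSeq_add (γ γ' : ℕ → ℝ) (k : ℕ) :
    deltaSeq (γ + γ') k = ∑ p ∈ antidiagonal k, deltaSeq γ p.1 * deltaSeq γ' p.2 := by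
  obtain ⟨h0, h⟩ := eq_mk_deltaSeq_iff.1 (rfl : PowerSeries.mk (deltaSeq γ) = _)
  obtain ⟨h0', h'⟩ := eq_mk_deltaSeq_iff.1 (rfl : PowerSeries.mk (deltaSeq γ') = _)
  have mk_add : PowerSeries.mk (γ + γ') = PowerSeries.mk γ + PowerSeries.mk γ' := rfl
  have mk_mul_mk : PowerSeries.mk (deltaSeq γ) * PowerSeries.mk (deltaSeq γ') =
      PowerSeries.mk (deltaSeq (γ + γ')) := by
    refine eq_mk_deltaSeq_iff.2 ⟨by rw [map_mul, h0, h0', one_mul], ?_⟩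
    rw [mk_add, Derivation.leibniz, h, h', map_add, smul_eq_mul, smul_eq_mul]
    ring
  simpa only [coeff_mul, coeff_mk] using (congrArg (coeff k) mk_mul_mk).symm

lemma succ_mul_deltaSeq_succ_div_mul_pow (a q : ℝ) (k : ℕ) :
    (k + 1) * deltaSeq (fun k ↦ a / k * q ^ k) (k + 1) =
      q * (a + k) * deltaSeq (fun k ↦ a / k * q ^ k) k := by
  set γ : ℕ → ℝ := fun k ↦ a / k * q ^ k with hγ
  have factor_mul_derivative : (1 - C q * X) * d⁄dX ℝ (PowerSeries.mk γ) = C (a * q) := by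
    have derivative_eq : d⁄dX ℝ (PowerSeries.mk γ) = PowerSeries.mk fun k ↦ a * q ^ (k + 1) := by
      ext k
      simp only [hγ, coeff_derivative, coeff_mk, Nat.cast_add_one]
      field_simp
    rw [derivative_eq]
    ext (_ | k)
    · simp [sub_mul, mul_assoc]
    · simp only [sub_mul, one_mul, map_sub, mul_assoc, coeff_C_mul, coeff_succ_X_mul, coeff_mk,
        coeff_C, Nat.succ_ne_zero, if_false]
      ring
  have coeff_eq : coeff k ((1 - C q * X) * d⁄dX ℝ (PowerSeries.mk (deltaSeq γ))) =
      a * q * deltaSeq γ k := by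
    rw [(eq_mk_deltaSeq_iff.1 rfl).2, ← mul_assoc, factor_mul_derivative, coeff_C_mul, coeff_mk]
  cases k with
  | zero =>
    simp only [sub_mul, one_mul, map_sub, mul_assoc, coeff_C_mul, coeff_zero_X_mul,
      coeff_derivative, coeff_mk] at coeff_eq
    linear_combination coeff_eq
  | succ k =>
    simp only [sub_mul, one_mul, map_sub, mul_assoc, coeff_C_mul, coeff_succ_X_mul,
      coeff_derivative, coeff_mk] at coeff_eq
    push_cast at coeff_eq ⊢
    linear_combination coeff_eq

end GeneratingFunction

lemma deltaSeq_div_mul_pow {a : ℝ} (ha : 0 < a) (q : ℝ) (k : ℕ) :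
    deltaSeq (fun k ↦ a / k * q ^ k) k = Gamma (a + k) / (Gamma a * k.factorial) * q ^ k := by
  have := (Gamma_pos_of_pos ha).ne'
  induction k with
  | zero => simp [deltaSeq, this]
  | succ k ih =>
    have recurrence := succ_mul_deltaSeq_succ_div_mul_pow a q k
    rw [ih] at recurrence
    rw [Nat.cast_succ, ← add_assoc, Gamma_add_one (by positivity), Nat.factorial_succ, pow_succ]
    apply mul_left_cancel₀ (k.cast_add_one_ne_zero (R := ℝ))
    rw [recurrence]
    push_cast
    field_simp

lemma lintegral_comp_mul_left (f : ℝ → ENNReal) {c : ℝ} (hc : c ≠ 0) :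
    ∫⁻ x, f (c * x) = ENNReal.ofReal |c⁻¹| * ∫⁻ x, f x := by
  rw [← smul_eq_mul, ← lintegral_smul_measure, ← Real.map_volume_mul_left hc]
  exact (lintegral_map_equiv f (MeasurableEquiv.mulLeft₀ c hc)).symm

lemma measurable_gammaPDF (a r : ℝ) : Measurable (gammaPDF a r) :=
  (measurable_gammaPDFReal a r).ennreal_ofReal

lemma gammaPDF_eq_mul_gammaPDF_mul (a : ℝ) {r c : ℝ} (hr : 0 < r) (hc : 0 < c) (x : ℝ) :
    gammaPDF a r x = ENNReal.ofReal c * gammaPDF a (r / c) (c * x) := by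
  rw [gammaPDF, gammaPDF, ← ENNReal.ofReal_mul hc.le]
  congr 1
  simp only [gammaPDFReal, mul_nonneg_iff_of_pos_left hc]
  split_ifs with hx
  · have r_mul_x : r / c * (c * x) = r * x := by field_simp
    rw [r_mul_x, div_rpow hr.le hc.le, mul_rpow hc.le hx, rpow_sub_one hc.ne']
    field_simp
  · rw [mul_zero]

lemma gammaMeasure_map_const_mul (a : ℝ) {r c : ℝ} (hr : 0 < r) (hc : 0 < c) :
    (gammaMeasure a r).map (c * ·) = gammaMeasure a (r / c) := by
  refine Measure.ext_of_lintegral _ fun φ hφ ↦ ?_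
  calc ∫⁻ x, φ x ∂(gammaMeasure a r).map (c * ·)
      = ∫⁻ x, gammaPDF a r x * φ (c * x) := by
        rw [lintegral_map hφ (by fun_prop), gammaMeasure,
          lintegral_withDensity_eq_lintegral_mul _ (measurable_gammaPDF a r) (by fun_prop)]
        rfl
    _ = ENNReal.ofReal c * ∫⁻ x, gammaPDF a (r / c) (c * x) * φ (c * x) := by
        simp_rw [gammaPDF_eq_mul_gammaPDF_mul a hr hc, mul_assoc]
        exact lintegral_const_mul' _ _ ENNReal.ofReal_ne_top
    _ = ∫⁻ x, gammaPDF a (r / c) x * φ x := by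
        rw [lintegral_comp_mul_left (fun x ↦ gammaPDF a (r / c) x * φ x) hc.ne', ← mul_assoc,
          ← ENNReal.ofReal_mul hc.le, abs_of_pos (inv_pos.2 hc), mul_inv_cancel₀ hc.ne',
          ENNReal.ofReal_one, one_mul]
    _ = ∫⁻ x, φ x ∂gammaMeasure a (r / c) := by
        rw [gammaMeasure, lintegral_withDensity_eq_lintegral_mul _ (measurable_gammaPDF _ _) hφ]
        rfl

lemma cdf_gammaMeasure_of_nonneg {a r x : ℝ} (ha : 0 < a) (hr : 0 < r) (hx : 0 ≤ x) :
    cdf (gammaMeasure a r) x = regIncGamma (r * x) a := by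
  have rate_mul_regIncGamma_integrand {t : ℝ} (ht : 0 ≤ t) :
      gammaPDFReal a r t = 1 / Gamma a * (r * ((r * t) ^ (a - 1) * exp (-(r * t)))) := by
    rw [gammaPDFReal, if_pos ht, mul_rpow hr.le ht, rpow_sub_one hr.ne']
    field_simp
  calc cdf (gammaMeasure a r) x
      = ∫ t in Set.Iic x, gammaPDFReal a r t := cdf_gammaMeasure_eq_integral ha hr x
    _ = ∫ t in Set.Icc 0 x, gammaPDFReal a r t := by
        refine setIntegral_eq_of_subset_of_forall_sdiff_eq_zero measurableSet_Iic
          Set.Icc_subset_Iic_self fun t ht ↦ ?_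
        exact if_neg fun ht_nonneg ↦ ht.2 ⟨ht_nonneg, ht.1⟩
    _ = ∫ t in 0..x, 1 / Gamma a * (r * ((r * t) ^ (a - 1) * exp (-(r * t)))) := by
        rw [integral_Icc_eq_integral_Ioc, ← intervalIntegral.integral_of_le hx]
        refine intervalIntegral.integral_congr fun t ht ↦ rate_mul_regIncGamma_integrand ?_
        rw [Set.uIcc_of_le hx] at ht
        exact ht.1
    _ = regIncGamma (r * x) a := by
        rw [regIncGamma, intervalIntegral.integral_const_mul, intervalIntegral.integral_const_mul,
          intervalIntegral.mul_integral_comp_mul_left (f := fun τ ↦ τ ^ (a - 1) * exp (-τ)),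
          mul_zero]

-- Given the sum `x` of two gamma variables of equal rate, the share `y / x` of one is `Beta(a, b)`.
lemma gammaPDF_mul_gammaPDF_sub {a b r x y : ℝ} (ha : 0 < a) (hb : 0 < b) (hr : 0 < r)
    (hx : 0 < x) (hy : y ≠ 0) (hyx : y ≠ x) :
    gammaPDF a r y * gammaPDF b r (x - y) =
      gammaPDF (a + b) r x * (ENNReal.ofReal x⁻¹ * betaPDF a b (x⁻¹ * y)) := by
  rcases hy.lt_or_gt with hy | hy
  · rw [gammaPDF_of_neg hy, betaPDF_eq_zero_of_nonpos, zero_mul, mul_zero, mul_zero]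
    exact mul_nonpos_of_nonneg_of_nonpos (inv_pos.2 hx).le hy.le
  rcases hyx.lt_or_gt with hyx | hyx
  · have hxy : 0 < x - y := sub_pos.2 hyx
    have hx_inv_mul : x⁻¹ * y < 1 := by rwa [inv_mul_lt_one₀ hx]
    have one_sub_inv_mul : 1 - x⁻¹ * y = x⁻¹ * (x - y) := by field_simp
    have exp_add_sub : exp (-(r * x)) = exp (-(r * y)) * exp (-(r * (x - y))) := by
      rw [← exp_add]; congr 1; ring
    have := (Gamma_pos_of_pos ha).ne'
    have := (Gamma_pos_of_pos hb).ne'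
    have := (Gamma_pos_of_pos (add_pos ha hb)).ne'
    rw [gammaPDF_of_nonneg hy.le, gammaPDF_of_nonneg hxy.le, gammaPDF_of_nonneg hx.le,
      betaPDF_of_pos_lt_one (by positivity) hx_inv_mul, ← ENNReal.ofReal_mul (by positivity),
      ← ENNReal.ofReal_mul (by positivity), ← ENNReal.ofReal_mul (by positivity), exp_add_sub,
      one_sub_inv_mul, mul_rpow (by positivity) hy.le, mul_rpow (by positivity) hxy.le,
      inv_rpow hx.le, inv_rpow hx.le, rpow_add hr, rpow_sub_one hx.ne', rpow_sub_one hx.ne',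
      rpow_sub_one hx.ne', rpow_add hx, beta]
    congr 1
    field_simp
  · rw [gammaPDF_of_neg (sub_neg.2 hyx), betaPDF_eq_zero_of_one_le, mul_zero, mul_zero, mul_zero]
    rw [le_inv_mul_iff₀ hx, mul_one]
    exact hyx.le

lemma lintegral_gammaPDF_mul_gammaPDF_sub {a b r x : ℝ} (ha : 0 < a) (hb : 0 < b) (hr : 0 < r)
    (hx : x ≠ 0) :
    ∫⁻ y, gammaPDF a r y * gammaPDF b r (x - y) = gammaPDF (a + b) r x := by
  rcases hx.lt_or_gt with hx | hx
  · rw [gammaPDF_of_neg hx]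
    refine lintegral_eq_zero_of_ae_eq_zero (ae_of_all _ fun y ↦ ?_)
    rcases lt_or_ge y 0 with hy | hy
    · simp [gammaPDF_of_neg hy]
    · simp [gammaPDF_of_neg (show x - y < 0 by linarith)]
  · have hx_inv := inv_pos.2 hx
    calc ∫⁻ y, gammaPDF a r y * gammaPDF b r (x - y)
        = ∫⁻ y, gammaPDF (a + b) r x * (ENNReal.ofReal x⁻¹ * betaPDF a b (x⁻¹ * y)) := by
          refine lintegral_congr_ae ?_
          filter_upwards [Measure.ae_ne volume 0, Measure.ae_ne volume x] with y hy hyx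
          exact gammaPDF_mul_gammaPDF_sub ha hb hr hx hy hyx
      _ = gammaPDF (a + b) r x := by
          rw [lintegral_const_mul' (gammaPDF (a + b) r x) _ ENNReal.ofReal_ne_top,
            lintegral_const_mul' _ _ ENNReal.ofReal_ne_top, lintegral_comp_mul_left _ hx_inv.ne',
            lintegral_betaPDF_eq_one ha hb, mul_one, inv_inv, abs_of_pos hx,
            ← ENNReal.ofReal_mul hx_inv.le, inv_mul_cancel₀ hx.ne', ENNReal.ofReal_one, mul_one]

lemma gammaMeasure_conv_gammaMeasure {a b r : ℝ} (ha : 0 < a) (hb : 0 < b) (hr : 0 < r) :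
    gammaMeasure a r ∗ gammaMeasure b r = gammaMeasure (a + b) r := by
  rw [gammaMeasure, gammaMeasure, gammaMeasure,
    conv_withDensity_eq_lconvolution (measurable_gammaPDF a r) (measurable_gammaPDF b r)]
  refine withDensity_congr_ae ?_
  filter_upwards [Measure.ae_ne volume 0] with x hx
  simp only [lconvolution_def, neg_add_eq_sub]
  exact lintegral_gammaPDF_mul_gammaPDF_sub ha hb hr hx

lemma hasSum_deltaSeq_mul_gammaPDFReal {a r s : ℝ} (ha : 0 < a) (hr : 0 < r) (hs : 0 < s) (x : ℝ) :
    HasSum (fun k : ℕ ↦ (r / s) ^ a * deltaSeq (fun k ↦ a / k * (1 - r / s) ^ k) k *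
      gammaPDFReal (a + k) s x) (gammaPDFReal a r x) := by
  rcases lt_or_ge x 0 with hx | hx
  · simpa only [gammaPDFReal, if_neg hx.not_ge, mul_zero] using hasSum_zero
  have rpow_shape (k : ℕ) : x ^ (a + k - 1) = x ^ (a - 1) * x ^ k := by
    rcases k.eq_zero_or_pos with rfl | hk
    · simp
    · have : (1 : ℝ) ≤ k := by exact_mod_cast hk
      rw [add_sub_right_comm, rpow_add_natCast' hx (by linarith)]
  have exp_split : exp (-(r * x)) = exp (-(s * x)) * exp ((s - r) * x) := by
    rw [← exp_add]; congr 1; ring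
  convert! (NormedSpace.expSeries_div_hasSum_exp ((s - r) * x)).mul_left
    ((r / s) ^ a * gammaPDFReal a s x) using 1
  · funext k
    have := (Gamma_pos_of_pos ha).ne'
    have : Gamma (a + k) ≠ 0 := (Gamma_pos_of_pos (by positivity)).ne'
    have one_sub_div : 1 - r / s = (s - r) / s := by field_simp
    rw [deltaSeq_div_mul_pow ha, gammaPDFReal, gammaPDFReal, if_pos hx, if_pos hx,
      rpow_add_natCast hs.ne', rpow_shape, one_sub_div, div_pow, mul_pow]
    field_simp
  · rw [← exp_eq_exp_ℝ, gammaPDFReal, gammaPDFReal, if_pos hx, if_pos hx, exp_split,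
      div_rpow hr.le hs.le]
    field_simp

/-- The mixture of the laws `Gamma(a + k, s)` of shape `a + k` and rate `s`, with weights `c * δ_k`:
the form in which sums of independent gamma variables of different rates are expanded. Weights are
truncated at `0`, so the definition is meaningful only when they are nonnegative. -/
noncomputable def gammaMixture (a s c : ℝ) (γ : ℕ → ℝ) : Measure ℝ :=
  Measure.sum fun k : ℕ ↦ ENNReal.ofReal (c * deltaSeq γ k) • gammaMeasure (a + k) s

lemma div_mul_one_sub_pow_nonneg {a q : ℝ} (ha : 0 ≤ a) (hq : q ≤ 1) (k : ℕ) :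
    0 ≤ a / k * (1 - q) ^ k :=
  mul_nonneg (div_nonneg ha k.cast_nonneg) (pow_nonneg (sub_nonneg.2 hq) k)

lemma gammaMeasure_eq_gammaMixture {a r s : ℝ} (ha : 0 < a) (hr : 0 < r) (hrs : r ≤ s) :
    gammaMeasure a r = gammaMixture a s ((r / s) ^ a) (fun k ↦ a / k * (1 - r / s) ^ k) := by
  have hs := hr.trans_le hrs
  set γ : ℕ → ℝ := fun k ↦ a / k * (1 - r / s) ^ k
  have hδ (k : ℕ) : 0 ≤ (r / s) ^ a * deltaSeq γ k :=
    mul_nonneg (by positivity) (deltaSeq_nonneg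
      (fun k ↦ div_mul_one_sub_pow_nonneg ha.le ((div_le_one hs).2 hrs) (k + 1)) k)
  have hpdf (x : ℝ) (k : ℕ) : 0 ≤ gammaPDFReal (a + k) s x :=
    gammaPDFReal_nonneg (by positivity) hs x
  have gammaPDF_eq_tsum : gammaPDF a r =
      ∑' k : ℕ, ENNReal.ofReal ((r / s) ^ a * deltaSeq γ k) • gammaPDF (a + k) s := by
    funext x
    have series := hasSum_deltaSeq_mul_gammaPDFReal ha hr hs x
    rw [gammaPDF, ← series.tsum_eq, ENNReal.ofReal_tsum_of_nonneg
      (fun k ↦ mul_nonneg (hδ k) (hpdf x k)) series.summable,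
      tsum_apply (Pi.summable.2 fun _ ↦ ENNReal.summable)]
    simp_rw [ENNReal.ofReal_mul (hδ _)]
    rfl
  rw [gammaMeasure, gammaPDF_eq_tsum,
    withDensity_tsum fun k ↦ (measurable_gammaPDF _ _).const_smul _, gammaMixture]
  simp_rw [withDensity_smul _ (measurable_gammaPDF _ _), gammaMeasure]

lemma sum_smul_conv_sum_smul {ι M : Type*} [AddMonoid ι] [HasAntidiagonal ι] [Countable ι]
    [AddMonoid M] [MeasurableSpace M] [MeasurableAdd₂ M] {μ ν ρ : ι → Measure M}
    [∀ i, SFinite (μ i)] [∀ j, SFinite (ν j)] (h : ∀ i j, μ i ∗ ν j = ρ (i + j))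
    (a b : ι → ENNReal) :
    Measure.sum (fun i ↦ a i • μ i) ∗ Measure.sum (fun j ↦ b j • ν j) =
      Measure.sum fun n ↦ (∑ p ∈ antidiagonal n, a p.1 * b p.2) • ρ n := by
  have conv_eq_sum_prod : Measure.sum (fun i ↦ a i • μ i) ∗ Measure.sum (fun j ↦ b j • ν j) =
      Measure.sum fun p : ι × ι ↦ (a p.1 * b p.2) • ρ (p.1 + p.2) := by
    rw [Measure.conv, Measure.prod_sum, Measure.map_sum (by fun_prop)]
    congr 1
    funext p
    rw [Measure.prod_smul_left, Measure.prod_smul_right, smul_smul, Measure.map_smul, ← h]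
    rfl
  rw [conv_eq_sum_prod]
  ext s hs
  rw [Measure.sum_apply _ hs, Measure.sum_apply _ hs,
    ← (HasAntidiagonal.sigmaAntidiagonalEquivProd (A := ι)).tsum_eq, ENNReal.tsum_sigma']
  congr 1
  funext n
  rw [Measure.smul_apply, smul_eq_mul, sum_mul, tsum_fintype, ← sum_coe_sort (antidiagonal n)]
  refine sum_congr rfl fun p _ ↦ ?_
  rw [HasAntidiagonal.sigmaAntidiagonalEquivProd_apply, mem_antidiagonal.1 p.2,
    Measure.smul_apply, smul_eq_mul]

lemma gammaMixture_conv {a a' s c c' : ℝ} {γ γ' : ℕ → ℝ} (ha : 0 < a) (ha' : 0 < a') (hs : 0 < s)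
    (hc : 0 ≤ c) (hc' : 0 ≤ c') (hγ : ∀ k, 0 ≤ γ (k + 1)) (hγ' : ∀ k, 0 ≤ γ' (k + 1)) :
    gammaMixture a s c γ ∗ gammaMixture a' s c' γ' = gammaMixture (a + a') s (c * c') (γ + γ') := by
  have (k : ℕ) := isProbabilityMeasure_gammaMeasure (a := a + k) (by positivity) hs
  have (k : ℕ) := isProbabilityMeasure_gammaMeasure (a := a' + k) (by positivity) hs
  have component_conv (i j : ℕ) : gammaMeasure (a + i) s ∗ gammaMeasure (a' + j) s =
      gammaMeasure (a + a' + (i + j : ℕ)) s := by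
    rw [gammaMeasure_conv_gammaMeasure (by positivity) (by positivity) hs, Nat.cast_add,
      add_add_add_comm]
  rw [gammaMixture, gammaMixture, gammaMixture,
    sum_smul_conv_sum_smul (ρ := fun k : ℕ ↦ gammaMeasure (a + a' + k) s) component_conv]
  congr! 3 with n
  have hδ (k : ℕ) : 0 ≤ c * deltaSeq γ k := mul_nonneg hc (deltaSeq_nonneg hγ k)
  have hδ' (k : ℕ) : 0 ≤ c' * deltaSeq γ' k := mul_nonneg hc' (deltaSeq_nonneg hγ' k)
  rw [deltaSeq_add, mul_sum, ENNReal.ofReal_sum_of_nonneg]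
  · refine sum_congr rfl fun p _ ↦ ?_
    rw [← ENNReal.ofReal_mul (hδ _), mul_mul_mul_comm]
  · intro p _
    rw [mul_mul_mul_comm]
    exact mul_nonneg (hδ _) (hδ' _)

lemma hasLaw_sum_gammaMixture {ι Ω : Type*} [MeasurableSpace Ω] {P : Measure Ω}
    {a c : ι → ℝ} {γ : ι → ℕ → ℝ} {s : ℝ} {Y : ι → Ω → ℝ} (ha : ∀ i, 0 < a i) (hs : 0 < s)
    (hc : ∀ i, 0 ≤ c i) (hγ : ∀ i k, 0 ≤ γ i (k + 1)) (hindep : iIndepFun Y P)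
    (hlaw : ∀ i, HasLaw (Y i) (gammaMixture (a i) s (c i) (γ i)) P) {t : Finset ι}
    (ht : t.Nonempty) :
    HasLaw (∑ i ∈ t, Y i)
      (gammaMixture (∑ i ∈ t, a i) s (∏ i ∈ t, c i) (∑ i ∈ t, γ i)) P := by
  have := hindep.isProbabilityMeasure
  have (i : ι) := (hlaw i).isProbabilityMeasure_iff.1 this
  induction ht using Finset.Nonempty.cons_induction with
  | singleton i => simpa only [sum_singleton, prod_singleton] using hlaw i
  | cons i t hi ht ih =>
    have := ih.isProbabilityMeasure_iff.1 ‹_›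
    have indep_sum : IndepFun (Y i) (∑ j ∈ t, Y j) P :=
      (hindep.indepFun_finsetSum_of_notMem₀ (fun j ↦ (hlaw j).aemeasurable) hi).symm
    have sum_γ_nonneg (k : ℕ) : 0 ≤ (∑ j ∈ t, γ j) (k + 1) := by
      rw [Finset.sum_apply]
      exact sum_nonneg fun j _ ↦ hγ j k
    rw [sum_cons, sum_cons, prod_cons, sum_cons, ← gammaMixture_conv (ha i)
      (sum_pos (fun j _ ↦ ha j) ht) hs (hc i) (prod_nonneg fun j _ ↦ hc j) (hγ i) sum_γ_nonneg]
    exact indep_sum.hasLaw_add (hlaw i) ih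

lemma hasSum_measureReal_sum {ι α : Type*} [MeasurableSpace α] {μ : ι → Measure α}
    [IsFiniteMeasure (Measure.sum μ)] {s : Set α} (hs : MeasurableSet s) :
    HasSum (fun i ↦ (μ i).real s) ((Measure.sum μ).real s) := by
  have tsum_ne_top : ∑' i, μ i s ≠ ⊤ := by
    rw [← Measure.sum_apply _ hs]
    exact measure_ne_top _ s
  rw [measureReal_def, Measure.sum_apply _ hs,
    ENNReal.tsum_toReal_eq (ENNReal.ne_top_of_tsum_ne_top tsum_ne_top)]
  exact ENNReal.hasSum_toReal tsum_ne_top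

lemma hasSum_measureReal_gammaMixture_Iic {a s c x : ℝ} {γ : ℕ → ℝ} (ha : 0 < a) (hs : 0 < s)
    (hc : 0 ≤ c) (hγ : ∀ k, 0 ≤ γ (k + 1)) (hx : 0 ≤ x) [IsFiniteMeasure (gammaMixture a s c γ)] :
    HasSum (fun k : ℕ ↦ c * (deltaSeq γ k * regIncGamma (s * x) (a + k)))
      ((gammaMixture a s c γ).real (Set.Iic x)) := by
  have (k : ℕ) := isProbabilityMeasure_gammaMeasure (a := a + k) (by positivity) hs
  have hδ (k : ℕ) : 0 ≤ c * deltaSeq γ k := mul_nonneg hc (deltaSeq_nonneg hγ k)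
  have component_Iic (k : ℕ) :
      c * (deltaSeq γ k * regIncGamma (s * x) (a + k)) =
        (ENNReal.ofReal (c * deltaSeq γ k) • gammaMeasure (a + k) s).real (Set.Iic x) := by
    rw [measureReal_ennreal_smul_apply, ENNReal.toReal_ofReal (hδ k), ← cdf_eq_real,
      cdf_gammaMeasure_of_nonneg (by positivity) hs hx, mul_assoc]
  simp_rw [component_Iic]
  unfold gammaMixture at *
  exact hasSum_measureReal_sum measurableSet_Iic

lemma hasLaw_sum_mul_gammaMixture {ι Ω : Type*} [Fintype ι] [Nonempty ι] [MeasurableSpace Ω]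
    {P : Measure Ω} {a β : ι → ℝ} {b : ℝ} {z : ι → Ω → ℝ} (ha : ∀ i, 0 < a i) (hb : 0 < b)
    (hbβ : ∀ i, b ≤ β i) (hindep : iIndepFun z P)
    (hlaw : ∀ i, HasLaw (z i) (gammaMeasure (a i) 1) P) :
    HasLaw (fun ω ↦ ∑ i, β i * z i ω) (gammaMixture (∑ i, a i) b⁻¹ (∏ i, (b / β i) ^ a i)
      (∑ i, fun k : ℕ ↦ a i / k * (1 - b / β i) ^ k)) P := by
  have hβ (i : ι) : 0 < β i := hb.trans_le (hbβ i)
  have scaled_law (i : ι) : HasLaw (fun ω ↦ β i * z i ω)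
      (gammaMixture (a i) b⁻¹ ((b / β i) ^ a i) fun k ↦ a i / k * (1 - b / β i) ^ k) P := by
    rw [← inv_div_inv, ← gammaMeasure_eq_gammaMixture (ha i) (inv_pos.2 (hβ i))
      (inv_anti₀ hb (hbβ i)), ← one_div, ← gammaMeasure_map_const_mul _ one_pos (hβ i)]
    have mul_law : HasLaw (β i * ·) ((gammaMeasure (a i) 1).map (β i * ·))
        (gammaMeasure (a i) 1) := ⟨by fun_prop, rfl⟩
    exact mul_law.fun_comp (hlaw i)
  have scaled_indep : iIndepFun (fun i ω ↦ β i * z i ω) P :=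
    hindep.comp (fun i y ↦ β i * y) fun i ↦ by fun_prop
  have sum_law := hasLaw_sum_gammaMixture ha (inv_pos.2 hb)
    (fun i ↦ rpow_nonneg (div_nonneg hb.le (hβ i).le) _)
    (fun i k ↦ div_mul_one_sub_pow_nonneg (ha i).le ((div_le_one (hβ i)).2 (hbβ i)) (k + 1))
    scaled_indep scaled_law univ_nonempty
  rwa [sum_fn] at sum_law

theorem stmt6_general {ι Ω : Type*} [Fintype ι] [Nonempty ι] [MeasurableSpace Ω] {P : Measure Ω}
    {a β : ι → ℝ} {b : ℝ} {z : ι → Ω → ℝ} {γ : ℕ → ℝ} {x : ℝ} (ha : ∀ i, 0 < a i) (hb : 0 < b)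
    (hbβ : ∀ i, b ≤ β i) (hindep : iIndepFun z P)
    (hlaw : ∀ i, HasLaw (z i) (gammaMeasure (a i) 1) P)
    (hγ : ∀ k : ℕ, 1 ≤ k → γ k = ∑ i, a i / k * (1 - b / β i) ^ k) (hx : 0 ≤ x) :
    Summable (fun k : ℕ ↦ deltaSeq γ k * regIncGamma (x / b) (∑ i, a i + k)) ∧
      P {ω | ∑ i, β i * z i ω ≤ x} =
        ENNReal.ofReal ((∏ i, (b / β i) ^ a i) *
          ∑' k : ℕ, deltaSeq γ k * regIncGamma (x / b) (∑ i, a i + k)) := by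
  have hβ (i : ι) : 0 < β i := hb.trans_le (hbβ i)
  have hc : 0 < ∏ i, (b / β i) ^ a i := prod_pos fun i _ ↦ rpow_pos_of_pos (div_pos hb (hβ i)) _
  have hγ_nonneg (k : ℕ) : 0 ≤ γ (k + 1) := by
    rw [hγ _ k.succ_pos]
    exact sum_nonneg fun i _ ↦
      div_mul_one_sub_pow_nonneg (ha i).le ((div_le_one (hβ i)).2 (hbβ i)) (k + 1)
  have deltaSeq_eq : deltaSeq γ = deltaSeq (∑ i, fun k : ℕ ↦ a i / k * (1 - b / β i) ^ k) :=
    deltaSeq_congr fun k ↦ by rw [hγ _ k.succ_pos, Finset.sum_apply]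
  have law := hasLaw_sum_mul_gammaMixture ha hb hbβ hindep hlaw
  rw [gammaMixture, ← deltaSeq_eq, ← gammaMixture] at law
  have := law.isProbabilityMeasure_iff.1 hindep.isProbabilityMeasure
  have series := hasSum_measureReal_gammaMixture_Iic
    (sum_pos (fun i _ ↦ ha i) univ_nonempty) (inv_pos.2 hb) hc.le hγ_nonneg hx
  simp_rw [inv_mul_eq_div] at series
  refine ⟨(summable_mul_left_iff hc.ne').1 series.summable, ?_⟩
  rw [law.measure_eq measurableSet_Iic, ← tsum_mul_left, series.tsum_eq, ofReal_measureReal]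
  rfl

/-- Series expansion for the CDF of a weighted sum of i.i.d. unit-mean exponentials:
`P(∑ᵢ βᵢ zᵢ ≤ x) = (∏ᵢ β_min/βᵢ) ∑_{k=0}^∞ δ_k p(x/β_min, n+k)`, and the series converges. -/
theorem stmt6
    {Ω : Type*} [MeasureSpace Ω] [IsProbabilityMeasure (ℙ : Measure Ω)]
    (n : ℕ) (hn : 1 ≤ n)
    (β : Fin n → ℝ) (hβ : ∀ i, 0 < β i)
    (βmin : ℝ) (hβmin_le : ∀ i, βmin ≤ β i) (hβmin_mem : ∃ i, β i = βmin)
    (z : Fin n → Ω → ℝ) (hzmeas : ∀ i, Measurable (z i))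
    (hzindep : iIndepFun z ℙ)
    (hzlaw : ∀ i, Measure.map (z i) ℙ = expMeasure 1)
    (γ : ℕ → ℝ) (hγ : ∀ k : ℕ, 1 ≤ k → γ k = ∑ i, (1 / (k : ℝ)) * (1 - βmin / β i) ^ k)
    (x : ℝ) (hx : 0 ≤ x) :
    Summable (fun k : ℕ => deltaSeq γ k * regIncGamma (x / βmin) ((n : ℝ) + k)) ∧
      ℙ {ω | ∑ i, β i * z i ω ≤ x} =
        ENNReal.ofReal
          ((∏ i, βmin / β i) *
            ∑' k : ℕ, deltaSeq γ k * regIncGamma (x / βmin) ((n : ℝ) + k)) := by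
  obtain ⟨i, rfl⟩ := hβmin_mem
  have : Nonempty (Fin n) := ⟨i⟩
  simpa using stmt6_general (fun _ ↦ one_pos) (hβ i) hβmin_le hzindep
    (fun i ↦ ⟨(hzmeas i).aemeasurable, hzlaw i⟩) hγ hx
end

section
/- Let M ≥ 2 be an integer, p_0, …, p_{M−1} ∈ (0,1), θ > 0 and n > 0, and define f(χ) = χ^M − (1−p_0) e^{−θn} χ^{M−1} − Σ_{m=1}^{M−2} (1−p_m) e^{−θn} (∏_{j=0}^{m−1} p_j) χ^{M−1−m} − e^{−θn} ∏_{j=0}^{M−1} p_j, and let χ* be its unique positive real root. Then (e^{−θn} ∏_{j=0}^{M−1} p_j)^{1/M} ≤ χ* < 1. In particular, the effective capacity ρ_S(θ) = −(1/(θT)) log χ* satisfies 0 < ρ_S(θ) ≤ n/(TM) + (1/(θTM)) log(1/∏_{j=0}^{M−1} p_j) for any T > 0. -/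
open Finset Real

/-!
Write `ε = exp (-θ n)`. A root of `f` satisfies `χ ^ M = ε * A`, where `A` is the constant
`∏ j < M, p j` plus a combination of powers of `χ` with nonnegative weights. Keeping only the
constant gives the lower bound. The weights telescope to a total of at most `1`, so for `1 ≤ χ` we
would have `A ≤ χ ^ (M - 1)` and thus `χ ^ M ≤ ε * χ ^ (M - 1) < χ ^ (M - 1)`, which is absurd.
The capacity bounds follow by taking logarithms.
-/

section FirstSuccess

variable {R : Type*} [CommRing R]

/-- The probability that decoding fails in rounds `0, …, m - 1` and succeeds in round `m`, when
`p j` is the probability of failure in round `j`. -/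
def firstSuccessProb (p : ℕ → R) (m : ℕ) : R :=
  (1 - p m) * ∏ j ∈ range m, p j

theorem sum_range_firstSuccessProb (p : ℕ → R) (N : ℕ) :
    ∑ m ∈ range N, firstSuccessProb p m = 1 - ∏ j ∈ range N, p j := by
  induction N with
  | zero => simp
  | succ N ih =>
    rw [sum_range_succ, ih, prod_range_succ, firstSuccessProb]
    ring

variable [LinearOrder R] [IsStrictOrderedRing R] {p : ℕ → R}

theorem firstSuccessProb_nonneg {m : ℕ} (hp₀ : ∀ j < m, 0 ≤ p j) (hp₁ : p m ≤ 1) :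
    0 ≤ firstSuccessProb p m :=
  mul_nonneg (sub_nonneg.2 hp₁) (prod_nonneg fun j hj ↦ hp₀ j (mem_range.1 hj))

theorem sum_firstSuccessProb_add_prod_succ_le_one {N : ℕ} (hp₀ : ∀ j < N, 0 ≤ p j)
    (hp₁ : p N ≤ 1) :
    ∑ m ∈ range N, firstSuccessProb p m + ∏ j ∈ range (N + 1), p j ≤ 1 := by
  have hprod : ∏ j ∈ range (N + 1), p j ≤ ∏ j ∈ range N, p j := by
    rw [prod_range_succ]
    exact mul_le_of_le_one_right (prod_nonneg fun j hj ↦ hp₀ j (mem_range.1 hj)) hp₁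
  rw [sum_range_firstSuccessProb]
  linarith

end FirstSuccess

theorem sum_mul_pow_le_sum_mul_pow_of_one_le {ι R : Type*} [CommSemiring R] [PartialOrder R]
    [IsOrderedRing R] {s : Finset ι} {w : ι → R} {e : ι → ℕ} {x : R} {N : ℕ}
    (hw : ∀ i ∈ s, 0 ≤ w i) (he : ∀ i ∈ s, e i ≤ N) (hx : 1 ≤ x) :
    ∑ i ∈ s, w i * x ^ e i ≤ (∑ i ∈ s, w i) * x ^ N := by
  rw [sum_mul]
  exact sum_le_sum fun i hi ↦
    mul_le_mul_of_nonneg_left (pow_le_pow_right₀ hx (he i hi)) (hw i hi)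

section HarqCharFun

variable {R : Type*} [CommRing R]

/-- The function `f` whose positive root determines the effective capacity, for the deadline
`M = N + 1` and the discount factor `ε = exp (-θ n)`. The leading term `(1 - p 0) * χ ^ (M - 1)` is
the summand `m = 0`. -/
def harqCharFun (p : ℕ → R) (ε : R) (N : ℕ) (χ : R) : R :=
  χ ^ (N + 1) -
    ε * (∑ m ∈ range N, firstSuccessProb p m * χ ^ (N - m) + ∏ j ∈ range (N + 1), p j)

theorem harqCharFun_succ (p : ℕ → R) (ε : R) (N : ℕ) (χ : R) :
    harqCharFun p ε (N + 1) χ =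
      χ ^ (N + 2) - (1 - p 0) * ε * χ ^ (N + 1) -
        (∑ m ∈ Icc 1 N, (1 - p m) * ε * (∏ j ∈ range m, p j) * χ ^ (N + 1 - m)) -
        ε * ∏ j ∈ range (N + 2), p j := by
  have hsum : ∑ m ∈ Icc 1 N, (1 - p m) * ε * (∏ j ∈ range m, p j) * χ ^ (N + 1 - m) =
      ε * ∑ m ∈ Ico 1 (N + 1), firstSuccessProb p m * χ ^ (N + 1 - m) := by
    rw [mul_sum, Ico_add_one_right_eq_Icc]
    refine sum_congr rfl fun m _ ↦ ?_
    rw [firstSuccessProb]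
    ring
  rw [hsum, harqCharFun, range_eq_Ico, sum_eq_sum_Ico_succ_bot N.succ_pos, firstSuccessProb,
    prod_range_zero]
  simp only [Nat.sub_zero, zero_add]
  ring

variable [LinearOrder R] [IsStrictOrderedRing R] {p : ℕ → R} {ε χ : R} {N : ℕ}

theorem mul_prod_le_pow_of_harqCharFun_eq_zero (hp : ∀ j < N, p j ∈ Set.Icc 0 1) (hε : 0 ≤ ε)
    (hχ : 0 ≤ χ) (hroot : harqCharFun p ε N χ = 0) :
    ε * ∏ j ∈ range (N + 1), p j ≤ χ ^ (N + 1) := by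
  rw [sub_eq_zero.1 hroot]
  refine mul_le_mul_of_nonneg_left (le_add_of_nonneg_left (sum_nonneg fun m hm ↦ ?_)) hε
  have hmN : m < N := mem_range.1 hm
  have hweight : 0 ≤ firstSuccessProb p m :=
    firstSuccessProb_nonneg (fun j hj ↦ (hp j (hj.trans hmN)).1) (hp m hmN).2
  exact mul_nonneg hweight (pow_nonneg hχ _)

theorem lt_one_of_harqCharFun_eq_zero (hp : ∀ j ≤ N, p j ∈ Set.Icc 0 1) (hε₀ : 0 ≤ ε)
    (hε₁ : ε < 1) (hroot : harqCharFun p ε N χ = 0) : χ < 1 := by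
  by_contra! hχ
  have hpow : 1 ≤ χ ^ N := one_le_pow₀ hχ
  have hpos : 0 < χ ^ N := one_pos.trans_le hpow
  have hprod : 0 ≤ ∏ j ∈ range (N + 1), p j :=
    prod_nonneg fun j hj ↦ (hp j (mem_range_succ_iff.1 hj)).1
  have hweight : ∀ m ≤ N, 0 ≤ firstSuccessProb p m := fun m hm ↦
    firstSuccessProb_nonneg (fun j hj ↦ (hp j (hj.le.trans hm)).1) (hp m hm).2
  have htotal : ∑ m ∈ range N, firstSuccessProb p m + ∏ j ∈ range (N + 1), p j ≤ 1 :=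
    sum_firstSuccessProb_add_prod_succ_le_one (fun j hj ↦ (hp j hj.le).1) (hp N le_rfl).2
  have hsum : ∑ m ∈ range N, firstSuccessProb p m * χ ^ (N - m) ≤
      (∑ m ∈ range N, firstSuccessProb p m) * χ ^ N :=
    sum_mul_pow_le_sum_mul_pow_of_one_le (fun m hm ↦ hweight m (mem_range.1 hm).le)
      (fun m _ ↦ N.sub_le m) hχ
  have hbracket : ∑ m ∈ range N, firstSuccessProb p m * χ ^ (N - m) +
      ∏ j ∈ range (N + 1), p j ≤ χ ^ N :=
    calc
      _ ≤ (∑ m ∈ range N, firstSuccessProb p m) * χ ^ N + (∏ j ∈ range (N + 1), p j) * χ ^ N :=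
        add_le_add hsum (le_mul_of_one_le_right hprod hpow)
      _ = (∑ m ∈ range N, firstSuccessProb p m + ∏ j ∈ range (N + 1), p j) * χ ^ N :=
        (add_mul _ _ _).symm
      _ ≤ χ ^ N := mul_le_of_le_one_left hpos.le htotal
  have hlt : χ ^ (N + 1) < χ ^ N :=
    calc
      χ ^ (N + 1) ≤ ε * χ ^ N :=
        (sub_eq_zero.1 hroot).trans_le (mul_le_mul_of_nonneg_left hbracket hε₀)
      _ < χ ^ N := mul_lt_of_lt_one_left hpos hε₁
  exact hlt.not_ge (pow_le_pow_right₀ hχ N.le_succ)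

end HarqCharFun

section EffectiveCapacity

/-- The effective capacity `ρ_S(θ)` for the frame duration `T`, as a function of the root `χ`. -/
noncomputable def effectiveCapacity (θ T χ : ℝ) : ℝ :=
  -(1 / (θ * T)) * log χ

variable {θ T χ : ℝ}

theorem effectiveCapacity_pos (hθ : 0 < θ) (hT : 0 < T) (hχ₀ : 0 < χ) (hχ₁ : χ < 1) :
    0 < effectiveCapacity θ T χ :=
  mul_pos_of_neg_of_neg (neg_neg_of_pos (by positivity)) (log_neg hχ₀ hχ₁)

theorem effectiveCapacity_le_of_exp_mul_le_pow {n P : ℝ} {M : ℕ} (hθ : 0 < θ) (hT : 0 < T)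
    (hM : M ≠ 0) (hP : 0 < P) (h : exp (-θ * n) * P ≤ χ ^ M) :
    effectiveCapacity θ T χ ≤ n / (T * M) + 1 / (θ * T * M) * log (1 / P) := by
  have hlog : -θ * n + log P ≤ M * log χ := by
    rw [← log_pow, ← log_exp (-θ * n), ← log_mul (exp_ne_zero _) hP.ne']
    exact log_le_log (mul_pos (exp_pos _) hP) h
  calc
    effectiveCapacity θ T χ = -(M * log χ) / (θ * T * M) := by
      rw [effectiveCapacity]
      field_simp
    _ ≤ -(-θ * n + log P) / (θ * T * M) := by gcongr
    _ = n / (T * M) + 1 / (θ * T * M) * log (1 / P) := by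
      rw [one_div P, log_inv]
      field_simp
      ring

end EffectiveCapacity

/-- Bounds on the root of Theorem 1:
`(e^{-θn} ∏_{j<M} p_j)^{1/M} ≤ χ* < 1`; hence the effective capacity
`ρ_S(θ) = -(1/(θT)) log χ*` satisfies
`0 < ρ_S(θ) ≤ n/(TM) + (1/(θTM)) log (1/∏_{j<M} p_j)` for any `T > 0`. -/
theorem stmt12
    (M : ℕ) (hM : 2 ≤ M) (p : ℕ → ℝ)
    (hp : ∀ m, m ≤ M - 1 → p m ∈ Set.Ioo (0 : ℝ) 1)
    (θ n : ℝ) (hθ : 0 < θ) (hn : 0 < n)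
    (f : ℝ → ℝ)
    (hf : ∀ χ : ℝ,
      f χ = χ ^ M - (1 - p 0) * Real.exp (-θ * n) * χ ^ (M - 1) -
        (∑ m ∈ Finset.Icc 1 (M - 2),
          (1 - p m) * Real.exp (-θ * n) * (∏ j ∈ Finset.range m, p j) * χ ^ (M - 1 - m)) -
        Real.exp (-θ * n) * ∏ j ∈ Finset.range M, p j)
    (χs : ℝ) (hχs_pos : 0 < χs) (hχs_root : f χs = 0)
    (hχs_uniq : ∀ χ : ℝ, 0 < χ → f χ = 0 → χ = χs) :
    (Real.exp (-θ * n) * ∏ j ∈ Finset.range M, p j) ^ ((1 : ℝ) / M) ≤ χs ∧ χs < 1 ∧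
      ∀ T : ℝ, 0 < T →
        0 < -(1 / (θ * T)) * Real.log χs ∧
          -(1 / (θ * T)) * Real.log χs ≤
            n / (T * M) + (1 / (θ * T * M)) * Real.log (1 / ∏ j ∈ Finset.range M, p j) := by
  obtain ⟨N, rfl⟩ := Nat.exists_eq_add_of_le' hM
  have hroot : harqCharFun p (exp (-θ * n)) (N + 1) χs = 0 := by
    rw [harqCharFun_succ, ← hχs_root, hf]
    rfl
  have hp' : ∀ j ≤ N + 1, p j ∈ Set.Icc 0 1 := fun j hj ↦ Set.Ioo_subset_Icc_self (hp j hj)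
  have hprod : 0 < ∏ j ∈ range (N + 2), p j :=
    prod_pos fun j hj ↦ (hp j (mem_range_succ_iff.1 hj)).1
  have hexp : exp (-θ * n) < 1 := exp_lt_one_iff.2 (mul_neg_of_neg_of_pos (neg_neg_of_pos hθ) hn)
  have hlower : exp (-θ * n) * ∏ j ∈ range (N + 2), p j ≤ χs ^ (N + 2) :=
    mul_prod_le_pow_of_harqCharFun_eq_zero (fun j hj ↦ hp' j hj.le) (exp_pos _).le hχs_pos.le hroot
  have hupper : χs < 1 := lt_one_of_harqCharFun_eq_zero hp' (exp_pos _).le hexp hroot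
  refine ⟨?_, hupper, fun T hT ↦ ⟨effectiveCapacity_pos hθ hT hχs_pos hupper,
    effectiveCapacity_le_of_exp_mul_le_pow hθ hT (by positivity) hprod hlower⟩⟩
  rw [one_div, rpow_inv_le_iff_of_pos (by positivity) hχs_pos.le (by positivity), rpow_natCast]
  exact hlower
end

section
/- Let M ≥ 2 be an integer and p_0, …, p_{M−1} ∈ (0,1), n > 0. For each θ > 0 let χ*(θ) be the unique positive real root of f_θ(χ) = χ^M − (1−p_0) e^{−θn} χ^{M−1} − Σ_{m=1}^{M−2} (1−p_m) e^{−θn} (∏_{j=0}^{m−1} p_j) χ^{M−1−m} − e^{−θn} ∏_{j=0}^{M−1} p_j. Then the function θ ↦ χ*(θ) is strictly decreasing on (0, ∞). -/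
open Finset Real

/- For a polynomial `q` of degree at most `d` with nonnegative coefficients, `q(x) / x ^ d` is a
nonnegative combination of nonpositive powers of `x`, hence nonincreasing on `(0, ∞)`. A positive
root of `x ^ d - t * q(x)` is a point where this quotient equals `1 / t`, so it must decrease
strictly when `t` does; for `f_θ` the parameter is `t = e ^ (-θ n)`. -/

section PositiveRoots

open Polynomial

variable {K : Type*} [Field K] [LinearOrder K] [IsStrictOrderedRing K]

lemma antitoneOn_pow_div_pow {k d : ℕ} (hkd : k ≤ d) :
    AntitoneOn (fun x : K ↦ x ^ k / x ^ d) (Set.Ioi 0) := by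
  intro a (ha : 0 < a) b (hb : 0 < b) hab
  have pow_div_pow_eq {x : K} (hx : 0 < x) : x ^ k / x ^ d = (x ^ (d - k))⁻¹ := by
    rw [pow_sub₀ x hx.ne' hkd, mul_inv, inv_inv, mul_comm, div_eq_mul_inv]
  simp only [pow_div_pow_eq ha, pow_div_pow_eq hb]
  gcongr

lemma antitoneOn_eval_div_pow {q : K[X]} {d : ℕ} (hq : ∀ i, 0 ≤ q.coeff i)
    (hd : q.natDegree ≤ d) : AntitoneOn (fun x ↦ q.eval x / x ^ d) (Set.Ioi 0) := by
  intro a ha b hb hab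
  simp only [eval_eq_sum_range, sum_div, mul_div_assoc]
  refine sum_le_sum fun i hi ↦ mul_le_mul_of_nonneg_left ?_ (hq i)
  exact antitoneOn_pow_div_pow ((mem_range_succ_iff.mp hi).trans hd) ha hb hab

theorem strictAntiOn_of_pow_eq_mul_eval {α : Type*} [Preorder α] {s : Set α} {t r : α → K}
    {q : K[X]} {d : ℕ} (hq : ∀ i, 0 ≤ q.coeff i) (hd : q.natDegree ≤ d)
    (ht : StrictAntiOn t s) (ht_pos : ∀ θ ∈ s, 0 < t θ) (hr_pos : ∀ θ ∈ s, 0 < r θ)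
    (hroot : ∀ θ ∈ s, r θ ^ d = t θ * q.eval (r θ)) : StrictAntiOn r s := by
  have quotient_eq : ∀ θ ∈ s, q.eval (r θ) / r θ ^ d = (t θ)⁻¹ := fun θ hθ ↦ by
    rw [div_eq_iff (pow_pos (hr_pos θ hθ) d).ne', hroot θ hθ,
      inv_mul_cancel_left₀ (ht_pos θ hθ).ne']
  intro a ha b hb hab
  refine (antitoneOn_eval_div_pow hq hd).reflect_lt (hr_pos a ha) (hr_pos b hb) ?_
  simp only [quotient_eq a ha, quotient_eq b hb]
  exact inv_strictAnti₀ (ht_pos b hb) (ht ha hb hab)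

end PositiveRoots

section HARQ

open Polynomial

/-- The polynomial `q` with `f_θ(χ) = χ ^ M - e ^ (-θ n) * q(χ)`, which collects the
`θ`-independent factors of the non-leading coefficients of `f_θ`. The term
`(1 - p 0) χ ^ (M - 1)`, written separately in `f_θ`, is the summand `m = 0`. -/
noncomputable def harqPolynomial (M : ℕ) (p : ℕ → ℝ) : ℝ[X] :=
  ∑ m ∈ range (M - 1), C ((1 - p m) * ∏ j ∈ range m, p j) * X ^ (M - 1 - m) +
    C (∏ j ∈ range M, p j)

lemma coeff_harqPolynomial_nonneg {M : ℕ} {p : ℕ → ℝ} (hp_nonneg : ∀ m < M, 0 ≤ p m)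
    (hp_le_one : ∀ m < M - 1, p m ≤ 1) (i : ℕ) : 0 ≤ (harqPolynomial M p).coeff i := by
  have prod_nonneg_of_le {m : ℕ} (hm : m ≤ M) : 0 ≤ ∏ j ∈ range m, p j :=
    prod_nonneg fun j hj ↦ hp_nonneg j ((mem_range.mp hj).trans_le hm)
  rw [harqPolynomial, coeff_add, finsetSum_coeff]
  refine add_nonneg (sum_nonneg fun m hm ↦ ?_) ?_
  · have hm : m < M - 1 := mem_range.mp hm
    have weight_nonneg : 0 ≤ (1 - p m) * ∏ j ∈ range m, p j :=
      mul_nonneg (sub_nonneg.mpr (hp_le_one m hm)) (prod_nonneg_of_le (by lia))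
    rw [coeff_C_mul_X_pow]
    split_ifs <;> order
  · rw [coeff_C]
    split_ifs
    exacts [prod_nonneg_of_le le_rfl, le_rfl]

lemma natDegree_harqPolynomial_le (M : ℕ) (p : ℕ → ℝ) :
    (harqPolynomial M p).natDegree ≤ M - 1 :=
  natDegree_add_le_of_degree_le
    (natDegree_sum_le_of_forall_le _ _ fun m _ ↦
      (natDegree_C_mul_X_pow_le _ _).trans (Nat.sub_le _ m))
    ((natDegree_C _).trans_le (Nat.zero_le _))

lemma eval_harqPolynomial {M : ℕ} (hM : 2 ≤ M) (p : ℕ → ℝ) (χ : ℝ) :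
    (harqPolynomial M p).eval χ = (1 - p 0) * χ ^ (M - 1) +
      ∑ m ∈ Icc 1 (M - 2), (1 - p m) * (∏ j ∈ range m, p j) * χ ^ (M - 1 - m) +
      ∏ j ∈ range M, p j := by
  have Ico_eq_Icc : Ico 1 (M - 1) = Icc 1 (M - 2) := by
    ext m
    simp only [mem_Ico, mem_Icc]
    lia
  simp only [harqPolynomial, eval_add, eval_finsetSum, eval_mul, eval_C, eval_pow, eval_X]
  rw [range_eq_Ico, sum_eq_sum_Ico_succ_bot (by lia), zero_add, Ico_eq_Icc]
  simp only [range_zero, prod_empty, mul_one, Nat.sub_zero]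

end HARQ

lemma strictAnti_exp_neg_mul {n : ℝ} (hn : 0 < n) : StrictAnti fun θ : ℝ ↦ exp (-θ * n) :=
  fun _ _ h ↦ exp_lt_exp.mpr (mul_lt_mul_of_pos_right (neg_lt_neg h) hn)

/-- The unique positive root `χ*(θ)` of `f_θ` is strictly decreasing in the QoS
exponent `θ` on `(0, ∞)`. -/
theorem stmt15
    (M : ℕ) (hM : 2 ≤ M) (p : ℕ → ℝ)
    (hp : ∀ m, m ≤ M - 1 → p m ∈ Set.Ioo (0 : ℝ) 1)
    (n : ℝ) (hn : 0 < n)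
    (f : ℝ → ℝ → ℝ)
    (hf : ∀ θ χ : ℝ,
      f θ χ = χ ^ M - (1 - p 0) * Real.exp (-θ * n) * χ ^ (M - 1) -
        (∑ m ∈ Finset.Icc 1 (M - 2),
          (1 - p m) * Real.exp (-θ * n) * (∏ j ∈ Finset.range m, p j) * χ ^ (M - 1 - m)) -
        Real.exp (-θ * n) * ∏ j ∈ Finset.range M, p j)
    (χstar : ℝ → ℝ)
    (hχstar : ∀ θ : ℝ, 0 < θ →
      0 < χstar θ ∧ f θ (χstar θ) = 0 ∧ ∀ χ : ℝ, 0 < χ → f θ χ = 0 → χ = χstar θ) :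
    StrictAntiOn χstar (Set.Ioi 0) := by
  have f_eq (θ χ : ℝ) : f θ χ = χ ^ M - exp (-θ * n) * (harqPolynomial M p).eval χ := by
    rw [hf, eval_harqPolynomial hM, mul_add, mul_add, mul_sum, ← sub_sub, ← sub_sub]
    congr 2
    · ring
    · exact sum_congr rfl fun m _ ↦ by ring
  refine strictAntiOn_of_pow_eq_mul_eval
    (coeff_harqPolynomial_nonneg (fun m hm ↦ (hp m (by lia)).1.le) fun m hm ↦ (hp m hm.le).2.le)
    ((natDegree_harqPolynomial_le M p).trans (Nat.sub_le M 1))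
    ((strictAnti_exp_neg_mul hn).strictAntiOn _) (fun θ _ ↦ exp_pos _)
    (fun θ hθ ↦ (hχstar θ hθ).1) fun θ hθ ↦ ?_
  exact sub_eq_zero.mp ((f_eq θ _).symm.trans (hχstar θ hθ).2.1)
end
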